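/- Theorem 3.6(ii), characteristic-polynomial part (critical-regime asymptotics of the average characteristic polynomial, with normalization written out explicitly). Fix m ∈ ℕ, τ ∈ ℝ, σ₁,…,σ_m > 0 and ξ > 0. For integers N with √N > τ and N > m, set a_N := N(1−τ/√N)^{−1} and D_N := ∫₀^∞ u^{ν₀} e^{−u} Ψ(u; ξ/√N) (u+a_N)^{N−m} ∏_{j=1}^m (u+√N σ_j) du. Then lim_{N→∞} N^{−N−(ν₀−m+1)/2} e^{−√N τ − τ²/2} D_N = ∫₀^∞ u^{ν₀} e^{−τu−u²/2} G₁(ξu) ∏_{j=1}^m (u+σ_j) du (the function Γ^{(m+1)}(ξ;σ₁,…,σ_m) of the paper). -/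

import Mathlib

open MeasureTheory Filter Topology

noncomputable section


/-- Pochhammer symbol `(a)_j` over `ℝ`. -/
def poch (a : ℝ) (j : ℕ) : ℝ := ∏ i ∈ Finset.range j, (a + i)

/-- The hypergeometric function `₀F₁(b; z)` for complex argument `z`. -/
def hyp0F1 (b : ℝ) (z : ℂ) : ℂ :=
  ∑' k : ℕ, (Real.Gamma b : ℂ) * z ^ k /
    ((Nat.factorial k : ℂ) * (Real.Gamma (b + k) : ℂ))

/-- The hypergeometric function `₀F₁(b; z)` for real argument `z`. -/
def hyp0F1R (b z : ℝ) : ℝ :=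
  ∑' k : ℕ, Real.Gamma b * z ^ k / (Nat.factorial k * Real.Gamma (b + k))

/-- The terminating hypergeometric sum `₁F₁(-k; b; u)`. -/
def hyp1F1T (k : ℕ) (b u : ℝ) : ℝ :=
  ∑ j ∈ Finset.range (k + 1),
    poch (-(k : ℝ)) j / (poch b j * Nat.factorial j) * u ^ j

/-- The function `Ψ(u;x)` of the paper. -/
def Psi (r ν0 : ℕ) (ν : Fin r → ℕ) (u x : ℝ) : ℝ :=
  (1 / Real.Gamma ((ν0 : ℝ) + 1)) *
    ∑' k : ℕ, x ^ k / Nat.factorial k * hyp1F1T k ((ν0 : ℝ) + 1) u *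
      ∏ l, 1 / Real.Gamma ((ν l : ℝ) + 1 + k)

/-- The positive orthant in `ℝ^r`. -/
def posOrth (r : ℕ) : Set (Fin r → ℝ) := {t | ∀ i, 0 < t i}

/-- The function `Φ(v;y)` of the paper, complex `v`. -/
def Phi (r ν0 : ℕ) (ν : Fin r → ℕ) (v : ℂ) (y : ℝ) : ℂ :=
  ((1 / Real.Gamma ((ν0 : ℝ) + 1) : ℝ) : ℂ) *
    ∫ t in posOrth r,
      (((∏ i, (t i) ^ ((ν i : ℝ) - 1) * Real.exp (-t i)) *
          (y / ∏ i, t i) ^ ν0 * Real.exp (-(y / ∏ i, t i)) : ℝ) : ℂ) *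
        hyp0F1 ((ν0 : ℝ) + 1) (-(v * ((y / ∏ i, t i : ℝ) : ℂ)))

/-- The function `Φ(v;y)` of the paper, real `v`. -/
def PhiR (r ν0 : ℕ) (ν : Fin r → ℕ) (v y : ℝ) : ℝ :=
  (1 / Real.Gamma ((ν0 : ℝ) + 1)) *
    ∫ t in posOrth r,
      ((∏ i, (t i) ^ ((ν i : ℝ) - 1) * Real.exp (-t i)) *
          (y / ∏ i, t i) ^ ν0 * Real.exp (-(y / ∏ i, t i))) *
        hyp0F1R ((ν0 : ℝ) + 1) (-(v * (y / ∏ i, t i)))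

/-- The double-contour-integral correlation kernel `K_N(x,y)` of Proposition 2.1,
with `C` the counterclockwise circle of center `c` and radius `R`. -/
def KN (r ν0 N : ℕ) (ν : Fin r → ℕ) (a : Fin N → ℝ) (c : ℂ) (R : ℝ) (x y : ℝ) : ℂ :=
  ∫ u in Set.Ioi (0 : ℝ),
    (2 * Real.pi * Complex.I)⁻¹ *
      ∮ v in C(c, R),
        (u : ℂ) ^ ν0 * Complex.exp (-(u : ℂ) + v) * ((Psi r ν0 ν u x : ℝ) : ℂ) *
          Phi r ν0 ν v y * ((u : ℂ) - v)⁻¹ * ∏ l, ((u : ℂ) + (a l : ℂ)) / (v + (a l : ℂ))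

/-- An admissible contour for `K_N`: a counterclockwise circle contained in the left
half-plane which encloses all the points `-a l`. -/
def AdmCircle (N : ℕ) (a : Fin N → ℝ) (c : ℂ) (R : ℝ) : Prop :=
  0 < R ∧ c.re + R < 0 ∧ ∀ l, ‖-(a l : ℂ) - c‖ < R

/-- The Meijer G-function `G^{1,0}_{0,r+2}(—;0,-ν₀,…,-ν_r | z)`, complex argument. -/
def G1 (r ν0 : ℕ) (ν : Fin r → ℕ) (z : ℂ) : ℂ :=
  ∑' k : ℕ, (-z) ^ k /
    ((Nat.factorial k : ℂ) * (Real.Gamma ((ν0 : ℝ) + 1 + k) : ℂ) *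
      ∏ l, (Real.Gamma ((ν l : ℝ) + 1 + k) : ℂ))

/-- The Meijer G-function `G^{1,0}_{0,r+2}(—;0,-ν₀,…,-ν_r | z)`, real argument. -/
def G1R (r ν0 : ℕ) (ν : Fin r → ℕ) (z : ℝ) : ℝ :=
  ∑' k : ℕ, (-z) ^ k /
    (Nat.factorial k * Real.Gamma ((ν0 : ℝ) + 1 + k) *
      ∏ l, Real.Gamma ((ν l : ℝ) + 1 + k))

/-- `g₀(w) = ∑ (-1)^k w^{ν₀+k}/(k! Γ(ν₀+k+1))`, complex argument. -/
def g0C (ν0 : ℕ) (w : ℂ) : ℂ :=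
  ∑' k : ℕ, (-1 : ℂ) ^ k * w ^ (ν0 + k) /
    ((Nat.factorial k : ℂ) * (Real.Gamma ((ν0 : ℝ) + k + 1) : ℂ))

/-- `g₀(w)`, real argument. -/
def g0R (ν0 : ℕ) (w : ℝ) : ℝ :=
  ∑' k : ℕ, (-1 : ℝ) ^ k * w ^ (ν0 + k) /
    (Nat.factorial k * Real.Gamma ((ν0 : ℝ) + k + 1))

/-- The Meijer G-function `G^{r+1,0}_{0,r+2}(—;ν₀,…,ν_r,0 | z)` for `z > 0`, real form. -/
def G2R (r ν0 : ℕ) (ν : Fin r → ℕ) (z : ℝ) : ℝ :=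
  ∫ t in posOrth r,
    (∏ l, (t l) ^ ((ν l : ℝ) - 1) * Real.exp (-t l)) * g0R ν0 (z / ∏ l, t l)

/-- The critical hard-edge kernel `𝒦^{h,r}(ξ,η;τ)` of Theorem 1.2, the inner integral
running up the imaginary axis `v = i t`. -/
def Kcrit (r ν0 : ℕ) (ν : Fin r → ℕ) (G2 : ℂ → ℂ) (τ ξ η : ℝ) : ℂ :=
  (2 * Real.pi * Complex.I)⁻¹ *
    ∫ u in Set.Ioi (0 : ℝ), ∫ t : ℝ,
      ((u : ℂ) / (Complex.I * t)) ^ ν0 *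
        Complex.exp (-(τ : ℂ) * u - (u : ℂ) ^ 2 / 2 + (τ : ℂ) * (Complex.I * t) +
          (Complex.I * t) ^ 2 / 2) *
        ((u : ℂ) - Complex.I * t)⁻¹ * G1 r ν0 ν ((u * ξ : ℝ) : ℂ) *
        G2 (Complex.I * t * (η : ℂ)) * Complex.I

/-- The deformed critical kernel `𝒦^{h,r}_m(ξ,η;τ,σ)` of Theorem 1.3, the inner integral
running up the vertical line `Re v = -c`. -/
def KcritLine (r ν0 m : ℕ) (ν : Fin r → ℕ) (σ : ℕ → ℝ) (G2 : ℂ → ℂ) (c τ ξ η : ℝ) : ℂ :=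
  (2 * Real.pi * Complex.I)⁻¹ *
    ∫ u in Set.Ioi (0 : ℝ), ∫ t : ℝ,
      ((u : ℂ) / (-(c : ℂ) + Complex.I * t)) ^ ν0 *
        Complex.exp (-(τ : ℂ) * u - (u : ℂ) ^ 2 / 2 +
          (τ : ℂ) * (-(c : ℂ) + Complex.I * t) + (-(c : ℂ) + Complex.I * t) ^ 2 / 2) *
        ((u : ℂ) - (-(c : ℂ) + Complex.I * t))⁻¹ *
        (∏ j ∈ Finset.range m,
          ((u : ℂ) + (σ j : ℂ)) / ((-(c : ℂ) + Complex.I * t) + (σ j : ℂ))) *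
        G1 r ν0 ν ((u * ξ : ℝ) : ℂ) * G2 ((-(c : ℂ) + Complex.I * t) * (η : ℂ)) * Complex.I




/-- `Ψ(u;x)` in the case `r = 0`. -/
def Psi0 (ν0 : ℕ) (u x : ℝ) : ℝ :=
  Real.exp x * hyp0F1R ((ν0 : ℝ) + 1) (-(u * x)) / Real.Gamma ((ν0 : ℝ) + 1)

/-- `Φ(v;y)` in the case `r = 0`, complex `v`. -/
def Phi0 (ν0 : ℕ) (v : ℂ) (y : ℝ) : ℂ :=
  ((y ^ ν0 * Real.exp (-y) / Real.Gamma ((ν0 : ℝ) + 1) : ℝ) : ℂ) *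
    hyp0F1 ((ν0 : ℝ) + 1) (-(v * (y : ℂ)))

/-- The kernel `K_N` in the case `r = 0`. -/
def KN0 (ν0 N : ℕ) (a : Fin N → ℝ) (c : ℂ) (R : ℝ) (x y : ℝ) : ℂ :=
  ∫ u in Set.Ioi (0 : ℝ),
    (2 * Real.pi * Complex.I)⁻¹ *
      ∮ v in C(c, R),
        (u : ℂ) ^ ν0 * Complex.exp (-(u : ℂ) + v) * ((Psi0 ν0 u x : ℝ) : ℂ) *
          Phi0 ν0 v y * ((u : ℂ) - v)⁻¹ * ∏ l, ((u : ℂ) + (a l : ℂ)) / (v + (a l : ℂ))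

/-- Laguerre polynomial `L_n^{ν}(x)`. -/
def laguerreL (n νp : ℕ) (x : ℝ) : ℝ :=
  ∑ k ∈ Finset.range (n + 1),
    (-1 : ℝ) ^ k * (Nat.choose (n + νp) (n - k)) * x ^ k / Nat.factorial k

/-- The function `Ψ^{(μ)}(u;x)` of Section 4. -/
def PsiMu (r ν0 : ℕ) (μ ν : Fin r → ℕ) (u x : ℝ) : ℝ :=
  (1 / Real.Gamma ((ν0 : ℝ) + 1)) *
    ∑' k : ℕ, x ^ k / Nat.factorial k * hyp1F1T k ((ν0 : ℝ) + 1) u *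
      ∏ l, Real.Gamma ((μ l : ℝ) + 1 + k) / Real.Gamma ((ν l : ℝ) + 1 + k)

/-- The open unit cube in `ℝ^r`. -/
def unitCube (r : ℕ) : Set (Fin r → ℝ) := {t | ∀ i, 0 < t i ∧ t i < 1}

/-- The function `Φ^{(μ)}(v;y)` of Section 4, complex `v`. -/
def PhiMu (r ν0 : ℕ) (μ ν : Fin r → ℕ) (v : ℂ) (y : ℝ) : ℂ :=
  ((1 / (Real.Gamma ((ν0 : ℝ) + 1) * ∏ l, Real.Gamma ((μ l : ℝ) - (ν l : ℝ))) : ℝ) : ℂ) *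
    ∫ t in unitCube r,
      (((∏ l, (t l) ^ ((ν l : ℝ) - 1) * (1 - t l) ^ ((μ l : ℝ) - (ν l : ℝ) - 1)) *
          (y / ∏ l, t l) ^ ν0 * Real.exp (-(y / ∏ l, t l)) : ℝ) : ℂ) *
        hyp0F1 ((ν0 : ℝ) + 1) (-(v * ((y / ∏ l, t l : ℝ) : ℂ)))

/-- The function `Φ^{(μ)}(v;y)` of Section 4, real `v`. -/
def PhiMuR (r ν0 : ℕ) (μ ν : Fin r → ℕ) (v y : ℝ) : ℝ :=
  (1 / (Real.Gamma ((ν0 : ℝ) + 1) * ∏ l, Real.Gamma ((μ l : ℝ) - (ν l : ℝ)))) *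
    ∫ t in unitCube r,
      ((∏ l, (t l) ^ ((ν l : ℝ) - 1) * (1 - t l) ^ ((μ l : ℝ) - (ν l : ℝ) - 1)) *
          (y / ∏ l, t l) ^ ν0 * Real.exp (-(y / ∏ l, t l))) *
        hyp0F1R ((ν0 : ℝ) + 1) (-(v * (y / ∏ l, t l)))

/-- The kernel `K_N` for the truncated-unitary product of Section 4. -/
def KNmu (r ν0 N : ℕ) (μ ν : Fin r → ℕ) (a : Fin N → ℝ) (c : ℂ) (R : ℝ) (x y : ℝ) : ℂ :=
  ∫ u in Set.Ioi (0 : ℝ),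
    (2 * Real.pi * Complex.I)⁻¹ *
      ∮ v in C(c, R),
        (u : ℂ) ^ ν0 * Complex.exp (-(u : ℂ) + v) * ((PsiMu r ν0 μ ν u x : ℝ) : ℂ) *
          PhiMu r ν0 μ ν v y * ((u : ℂ) - v)⁻¹ * ∏ l, ((u : ℂ) + (a l : ℂ)) / (v + (a l : ℂ))

/-- Mixed domain `(0,1)^q × (0,∞)^{r-q}`. -/
def mixedSet (r q : ℕ) : Set (Fin r → ℝ) := {t | ∀ l, 0 < t l ∧ ((l : ℕ) < q → t l < 1)}

/-- The Meijer G-function `G^{1,q}_{q,r+2}(-μ₁,…,-μ_q; 0,-ν₀,…,-ν_r | z)`, real form. -/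
def G1qR (r ν0 q : ℕ) (μ ν : Fin r → ℕ) (z : ℝ) : ℝ :=
  ∑' k : ℕ, (-z) ^ k *
    (∏ l ∈ Finset.univ.filter fun l : Fin r => (l : ℕ) < q, Real.Gamma ((μ l : ℝ) + 1 + k)) /
    (Nat.factorial k * Real.Gamma ((ν0 : ℝ) + 1 + k) *
      ∏ l, Real.Gamma ((ν l : ℝ) + 1 + k))

/-- The Meijer G-function `G^{1,q}_{q,r+2}(-μ₁,…,-μ_q; 0,-ν₀,…,-ν_r | z)`, complex form. -/
def G1q (r ν0 q : ℕ) (μ ν : Fin r → ℕ) (z : ℂ) : ℂ :=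
  ∑' k : ℕ, (-z) ^ k *
    ((∏ l ∈ Finset.univ.filter fun l : Fin r => (l : ℕ) < q,
      Real.Gamma ((μ l : ℝ) + 1 + k) : ℝ) : ℂ) /
    ((Nat.factorial k : ℂ) * (Real.Gamma ((ν0 : ℝ) + 1 + k) : ℂ) *
      ∏ l, (Real.Gamma ((ν l : ℝ) + 1 + k) : ℂ))

/-- The Meijer G-function `G^{r+1,0}_{q,r+2}(μ₁,…,μ_q; ν₀,…,ν_r,0 | z)` for `z > 0`. -/
def G2qR (r ν0 q : ℕ) (μ ν : Fin r → ℕ) (z : ℝ) : ℝ :=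
  ∫ t in mixedSet r q,
    (∏ l : Fin r, if l.val < q then
        (t l) ^ ((ν l : ℝ) - 1) * (1 - t l) ^ ((μ l : ℝ) - (ν l : ℝ) - 1) /
          Real.Gamma ((μ l : ℝ) - (ν l : ℝ))
      else (t l) ^ ((ν l : ℝ) - 1) * Real.exp (-t l)) *
      g0R ν0 (z / ∏ l, t l)



lemma my_gamma (n k : ℕ) : Real.Gamma ((n : ℝ) + 1 + k) = ((n + k).factorial : ℝ) := by
  rw [← Real.Gamma_nat_eq_factorial]; congr 1; push_cast; ring

lemma my_gamma_one_le (n k : ℕ) : 1 ≤ Real.Gamma ((n : ℝ) + 1 + k) := by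
  rw [my_gamma]; exact_mod_cast Nat.one_le_iff_ne_zero.mpr (Nat.factorial_ne_zero _)

lemma my_poch_neg (k j : ℕ) : poch (-(k : ℝ)) j = (-1) ^ j * (k.descFactorial j : ℝ) := by
  induction j with
  | zero => simp [poch]
  | succ j ih =>
    have h : poch (-(k : ℝ)) (j + 1) = poch (-(k : ℝ)) j * (-(k : ℝ) + j) := by
      simp [poch, Finset.prod_range_succ]
    rw [h, ih, Nat.descFactorial_succ]
    rcases le_or_gt j k with hjk | hjk
    · push_cast [Nat.cast_sub hjk]; ring
    · simp [Nat.descFactorial_eq_zero_iff_lt.mpr hjk]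

lemma my_poch_one_le (n j : ℕ) : 1 ≤ poch ((n : ℝ) + 1) j := by
  unfold poch
  induction j with
  | zero => simp
  | succ j ih =>
    rw [Finset.prod_range_succ]
    have : (1 : ℝ) ≤ (n : ℝ) + 1 + j := by
      have h1 : (0 : ℝ) ≤ n := n.cast_nonneg
      have h2 : (0 : ℝ) ≤ j := j.cast_nonneg
      linarith
    nlinarith

lemma my_poch_gamma (n j : ℕ) :
    poch ((n : ℝ) + 1) j * Real.Gamma ((n : ℝ) + 1) = Real.Gamma ((n : ℝ) + 1 + j) := by
  induction j with
  | zero => simp [poch]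
  | succ j ih =>
    have h : poch ((n : ℝ) + 1) (j + 1) = poch ((n : ℝ) + 1) j * ((n : ℝ) + 1 + j) := by
      simp [poch, Finset.prod_range_succ]
    have hp : (n : ℝ) + 1 + j ≠ 0 := by positivity
    have h2 : ((n : ℝ) + 1 + ((j + 1 : ℕ) : ℝ)) = ((n : ℝ) + 1 + j) + 1 := by push_cast; ring
    rw [h, h2, Real.Gamma_add_one hp, ← ih]; ring

lemma my_hyp_bound (k n : ℕ) (u : ℝ) : |hyp1F1T k ((n : ℝ) + 1) u| ≤ (1 + |u|) ^ k := by
  unfold hyp1F1T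
  refine (Finset.abs_sum_le_sum_abs _ _).trans ?_
  rw [add_comm 1 |u|, add_pow]
  refine Finset.sum_le_sum fun j _ => ?_
  rw [my_poch_neg, abs_mul, abs_div, abs_mul, abs_mul, abs_pow, abs_pow,
    Nat.descFactorial_eq_factorial_mul_choose]
  have hp := my_poch_one_le n j
  have hf : (0 : ℝ) < (j.factorial : ℝ) := by exact_mod_cast Nat.factorial_pos j
  rw [abs_of_pos (lt_of_lt_of_le one_pos hp), Nat.abs_cast, Nat.abs_cast]
  have : |(-1 : ℝ)| ^ j * ((j.factorial * k.choose j : ℕ) : ℝ) /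
      (poch ((n : ℝ) + 1) j * j.factorial) ≤ k.choose j := by
    rw [div_le_iff₀ (by positivity)]
    push_cast
    simp only [abs_neg, abs_one, one_pow, one_mul, mul_comm (j.factorial : ℝ)]
    have h0 : (0 : ℝ) ≤ (k.choose j : ℝ) * j.factorial := by positivity
    nlinarith
  simp only [one_pow, mul_one]
  rw [mul_comm]
  gcongr

lemma my_prod_gamma_bound {r : ℕ} (ν : Fin r → ℕ) (k : ℕ) :
    |∏ l, 1 / Real.Gamma ((ν l : ℝ) + 1 + k)| ≤ 1 := by
  rw [Finset.abs_prod]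
  refine Finset.prod_le_one (fun _ _ => abs_nonneg _) fun l _ => ?_
  have := my_gamma_one_le (ν l) k
  rw [abs_of_nonneg (by positivity)]
  exact (div_le_one (by linarith)).mpr this

/-- term of the series for Psi -/
def psiT (r ν0 : ℕ) (ν : Fin r → ℕ) (u x : ℝ) (k : ℕ) : ℝ :=
  x ^ k / Nat.factorial k * hyp1F1T k ((ν0 : ℝ) + 1) u *
      ∏ l, 1 / Real.Gamma ((ν l : ℝ) + 1 + k)

lemma psiT_bound (r ν0 : ℕ) (ν : Fin r → ℕ) (u x : ℝ) (k : ℕ) :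
    ‖psiT r ν0 ν u x k‖ ≤ (|x| * (1 + |u|)) ^ k / Nat.factorial k := by
  unfold psiT
  rw [Real.norm_eq_abs, abs_mul, abs_mul, abs_div, abs_pow, Nat.abs_cast]
  calc |x| ^ k / k.factorial * |hyp1F1T k ((ν0 : ℝ) + 1) u| * |∏ l, 1 / Real.Gamma ((ν l : ℝ) + 1 + k)|
      ≤ |x| ^ k / k.factorial * (1 + |u|) ^ k * 1 := by
        gcongr
        · exact my_hyp_bound k ν0 u
        · exact my_prod_gamma_bound ν k
    _ = _ := by rw [mul_pow]; ring

lemma psiT_summable (r ν0 : ℕ) (ν : Fin r → ℕ) (u x : ℝ) : Summable (psiT r ν0 ν u x) :=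
  Summable.of_norm_bounded (Real.summable_pow_div_factorial _) (psiT_bound r ν0 ν u x)

lemma psi_bound (r ν0 : ℕ) (ν : Fin r → ℕ) (u x : ℝ) :
    |Psi r ν0 ν u x| ≤ Real.exp (|x| * (1 + |u|)) := by
  have h1 : |∑' k, psiT r ν0 ν u x k| ≤ Real.exp (|x| * (1 + |u|)) := by
    have h := tsum_of_norm_bounded (f := psiT r ν0 ν u x)
      (Real.summable_pow_div_factorial (|x| * (1 + |u|))).hasSum (psiT_bound r ν0 ν u x)
    rw [Real.exp_eq_exp_ℝ, NormedSpace.exp_eq_tsum_div]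
    exact h
  have h2 : (1 : ℝ) ≤ Real.Gamma ((ν0 : ℝ) + 1) := by simpa using my_gamma_one_le ν0 0
  unfold Psi
  rw [abs_mul]
  change _ * |∑' k, psiT r ν0 ν u x k| ≤ _
  rw [abs_of_nonneg (by positivity)]
  have h3 : 1 / Real.Gamma ((ν0 : ℝ) + 1) ≤ 1 := (div_le_one (by linarith)).mpr h2
  calc _ ≤ 1 * Real.exp (|x| * (1 + |u|)) := by gcongr
    _ = _ := one_mul _

lemma psi_measurable (r ν0 : ℕ) (ν : Fin r → ℕ) (x : ℝ) :
    Measurable fun u => Psi r ν0 ν u x := by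
  have h : Measurable fun u => ∑' k, psiT r ν0 ν u x k := by
    refine measurable_of_tendsto_metrizable (f := fun n u => ∑ k ∈ Finset.range n, psiT r ν0 ν u x k)
      (fun n => ?_) ?_
    · refine Continuous.measurable ?_
      unfold psiT hyp1F1T
      fun_prop
    · rw [tendsto_pi_nhds]
      intro u
      exact (psiT_summable r ν0 ν u x).hasSum.tendsto_sum_nat
  exact h.const_mul _

lemma psi_tendsto (r ν0 : ℕ) (ν : Fin r → ℕ) (ξ s : ℝ) (hs : 0 < s) (hξ : 0 < ξ) :
    Tendsto (fun N : ℕ => Psi r ν0 ν (√(N : ℝ) * s) (ξ / √(N : ℝ))) atTop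
      (𝓝 (G1R r ν0 ν (ξ * s))) := by
  have hinv : Tendsto (fun N : ℕ => (√(N : ℝ))⁻¹) atTop (𝓝 0) :=
    (Real.tendsto_sqrt_atTop.comp tendsto_natCast_atTop_atTop).inv_tendsto_atTop
  have hpos : ∀ᶠ N : ℕ in atTop, 1 ≤ √(N : ℝ) := by
    filter_upwards [eventually_ge_atTop 1] with N hN
    rw [Real.one_le_sqrt]; exact_mod_cast hN
  have h : Tendsto (fun N : ℕ => ∑' k, psiT r ν0 ν (√(N : ℝ) * s) (ξ / √(N : ℝ)) k) atTop
      (𝓝 (∑' k, (ξ ^ k / k.factorial * ∑ j ∈ Finset.range (k + 1),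
        poch (-(k : ℝ)) j / (poch ((ν0 : ℝ) + 1) j * Nat.factorial j) * s ^ j * 0 ^ (k - j)) *
        ∏ l, 1 / Real.Gamma ((ν l : ℝ) + 1 + k))) := by
    refine tendsto_tsum_of_dominated_convergence
      (bound := fun k => (ξ * (1 + s)) ^ k / Nat.factorial k)
      (Real.summable_pow_div_factorial _) ?_ ?_
    · intro k
      have hc : Continuous fun ε : ℝ => (ξ ^ k / k.factorial * ∑ j ∈ Finset.range (k + 1),
        poch (-(k : ℝ)) j / (poch ((ν0 : ℝ) + 1) j * Nat.factorial j) * s ^ j * ε ^ (k - j)) *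
        ∏ l, 1 / Real.Gamma ((ν l : ℝ) + 1 + k) := by fun_prop
      refine ((hc.tendsto 0).comp hinv).congr' ?_
      filter_upwards [hpos] with N hN
      have hN0 : √(N : ℝ) ≠ 0 := by positivity
      simp only [Function.comp, psiT, hyp1F1T]
      congr 1
      rw [div_pow, div_right_comm, div_eq_mul_inv (ξ ^ k / (k.factorial : ℝ)), mul_assoc]
      congr 1
      rw [Finset.mul_sum]
      refine Finset.sum_congr rfl fun j hj => ?_
      have hjk : j ≤ k := by simpa [Nat.lt_succ_iff] using hj
      obtain ⟨i, rfl⟩ := Nat.exists_eq_add_of_le hjk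
      rw [Nat.add_sub_cancel_left, mul_pow, pow_add, inv_pow]
      field_simp
    · filter_upwards [hpos] with N hN k
      refine (psiT_bound _ _ _ _ _ _).trans ?_
      have hN0 : 0 < √(N : ℝ) := by positivity
      rw [abs_of_pos (by positivity), abs_of_pos (by positivity)]
      refine div_le_div_of_nonneg_right (pow_le_pow_left₀ (by positivity) ?_ k) (by positivity)
      rw [mul_add, mul_add, mul_one, mul_one]
      have e : ξ / √(N : ℝ) * (√(N : ℝ) * s) = ξ * s := by field_simp
      rw [e]
      have := div_le_self hξ.le hN
      linarith
  have h2 := h.const_mul (1 / Real.Gamma ((ν0 : ℝ) + 1))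
  convert h2 using 2
  · rfl
  unfold G1R
  rw [← tsum_mul_left]
  refine tsum_congr fun k => ?_
  rw [Finset.sum_range_succ, Finset.sum_eq_zero, zero_add, Nat.sub_self, pow_zero, mul_one,
    my_poch_neg, Nat.descFactorial_self, ← my_poch_gamma ν0 k]
  · have hp := my_poch_one_le ν0 k
    have h2 : (1 : ℝ) ≤ Real.Gamma ((ν0 : ℝ) + 1) := by simpa using my_gamma_one_le ν0 0
    have hpr : ∏ l, Real.Gamma ((ν l : ℝ) + 1 + k) ≠ 0 := by
      rw [Finset.prod_ne_zero_iff]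
      intro l _
      have := my_gamma_one_le (ν l) k
      positivity
    have hp0 : poch ((ν0 : ℝ) + 1) k ≠ 0 := by positivity
    have hg0 : Real.Gamma ((ν0 : ℝ) + 1) ≠ 0 := by positivity
    have hf : (k.factorial : ℝ) ≠ 0 := by exact_mod_cast Nat.factorial_ne_zero k
    rw [Finset.prod_div_distrib, Finset.prod_const_one, neg_pow, mul_pow]
    field_simp
  · intro j hj
    have : k - j ≠ 0 := by have := Finset.mem_range.mp hj; omega
    simp [this]

lemma log_lim (y : ℕ → ℝ) (t : ℝ) (h : Tendsto (fun N : ℕ => √(N : ℝ) * y N) atTop (𝓝 t)) :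
    Tendsto (fun N : ℕ => (1 + y N) ^ N * Real.exp (-(N * y N))) atTop
      (𝓝 (Real.exp (-(t ^ 2 / 2)))) := by
  have hinv : Tendsto (fun N : ℕ => (√(N : ℝ))⁻¹) atTop (𝓝 0) :=
    (Real.tendsto_sqrt_atTop.comp tendsto_natCast_atTop_atTop).inv_tendsto_atTop
  have hy : Tendsto y atTop (𝓝 0) := by
    have := hinv.mul h
    rw [zero_mul] at this
    refine this.congr' ?_
    filter_upwards [eventually_ge_atTop 1] with N hN
    have : √(N : ℝ) ≠ 0 := by
      have : (0 : ℝ) < N := by exact_mod_cast hN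
      positivity
    field_simp
  have hsmall : ∀ᶠ N in atTop, |y N| < 1 / 2 := by
    have := hy.abs
    rw [abs_zero] at this
    exact this.eventually_lt_const (by norm_num)
  have hsq : Tendsto (fun N : ℕ => (N : ℝ) * (y N) ^ 2) atTop (𝓝 (t ^ 2)) := by
    refine (h.pow 2).congr fun N => ?_
    rw [mul_pow, Real.sq_sqrt (Nat.cast_nonneg _)]
  have herr : Tendsto (fun N : ℕ => (N : ℝ) * (Real.log (1 + y N) - y N + (y N) ^ 2 / 2)) atTop
      (𝓝 0) := by
    have hb : Tendsto (fun N : ℕ => ((N : ℝ) * (y N) ^ 2) * |y N| * 2) atTop (𝓝 0) := by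
      have := (hsq.mul hy.abs).mul_const 2
      simpa using this
    refine squeeze_zero_norm' ?_ hb
    filter_upwards [hsmall] with N hN
    have h1 := Real.abs_log_sub_add_sum_range_le (x := -y N) (by rw [abs_neg]; linarith) 2
    simp only [Finset.sum_range_succ, Finset.sum_range_zero, abs_neg] at h1
    norm_num at h1
    rw [norm_mul, Real.norm_natCast, Real.norm_eq_abs]
    have h2 : |Real.log (1 + y N) - y N + y N ^ 2 / 2| ≤ |y N| ^ 3 / (1 - |y N|) := by
      convert h1 using 2
      ring
    have h3 : |y N| ^ 3 / (1 - |y N|) ≤ |y N| ^ 3 * 2 := by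
      rw [div_le_iff₀ (by linarith)]
      have : 0 ≤ |y N| ^ 3 := by positivity
      nlinarith
    calc (N : ℝ) * |Real.log (1 + y N) - y N + y N ^ 2 / 2| ≤ N * (|y N| ^ 3 * 2) := by
          gcongr; exact h2.trans h3
      _ = _ := by rw [← sq_abs (y N)]; ring
  have hexp := (herr.sub (hsq.div_const 2)).rexp
  rw [zero_sub] at hexp
  refine hexp.congr' ?_
  filter_upwards [hsmall] with N hN
  have hpos : 0 < 1 + y N := by have := abs_lt.mp hN; linarith
  rw [← Real.exp_log (pow_pos hpos N), ← Real.exp_add, Real.log_pow]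
  congr 1; ring

lemma log_up (y : ℝ) (hy : 0 ≤ y) : Real.log (1 + y) ≤ y - y ^ 2 / (4 * (1 + y)) := by
  obtain ⟨w, hw, hwy⟩ : ∃ w : ℝ, 1 ≤ w ∧ 1 + y = w ^ 2 :=
    ⟨√(1 + y), by rw [Real.one_le_sqrt]; linarith, (Real.sq_sqrt (by linarith)).symm⟩
  have h := Real.log_le_sub_one_of_pos (x := w) (by linarith)
  obtain rfl : y = w ^ 2 - 1 := by linarith
  rw [hwy, Real.log_pow]
  have h2 : (w ^ 2 - 1) ^ 2 / (4 * w ^ 2) ≤ (w - 1) ^ 2 := by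
    rw [div_le_iff₀ (by positivity)]
    have : (w ^ 2 - 1) ^ 2 = (w - 1) ^ 2 * (w + 1) ^ 2 := by ring
    rw [this]
    gcongr
    nlinarith
  push_cast
  nlinarith

lemma gauss_bound (S τ A s : ℝ) (n N : ℕ) (hn : n ≤ N) (hSN : S ^ 2 = N) (hA : 1 ≤ A)
    (hS : 32 * A ≤ S) (hc1 : 1 / 2 ≤ 1 - τ / S) (hc2 : 1 - τ / S ≤ 2) (hs : 0 < s) :
    Real.exp (-(S * s)) * (1 + s * (1 - τ / S) / S) ^ n ≤
      Real.exp (-τ * s - A * s + 16 * A ^ 2) := by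
  have hS0 : 0 < S := by linarith
  set c := 1 - τ / S with hc
  have hSc : S * c = S - τ := by rw [hc]; field_simp
  set y := s * c / S with hy
  have hc0 : 0 < c := by linarith
  have hy0 : 0 < y := by positivity
  have hyS : S * y = s * c := by rw [hy]; field_simp
  have hlog := log_up y hy0.le
  calc Real.exp (-(S * s)) * (1 + y) ^ n ≤ Real.exp (-(S * s)) * (1 + y) ^ N := by
        gcongr; linarith
    _ = Real.exp (-(S * s) + N * Real.log (1 + y)) := by
        rw [Real.exp_add, ← Real.log_pow, Real.exp_log (by positivity)]
    _ ≤ _ := by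
        apply Real.exp_le_exp.mpr
        have h1 : (N : ℝ) * Real.log (1 + y) ≤ N * (y - y ^ 2 / (4 * (1 + y))) := by gcongr
        have h2 : (N : ℝ) * (y - y ^ 2 / (4 * (1 + y))) =
            S * s - τ * s - (s * c) ^ 2 / (4 * (1 + y)) := by
          rw [← hSN, ← hyS]
          have : S ^ 2 * y = S * s - τ * s := by
            rw [pow_two, mul_assoc, hyS]; linear_combination s * hSc
          rw [mul_sub, this]; ring
        have h3 : A * s - 16 * A ^ 2 ≤ (s * c) ^ 2 / (4 * (1 + y)) := by
          rw [le_div_iff₀ (by positivity)]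
          have hy2 : 32 * A * y ≤ 2 * s := by
            calc 32 * A * y ≤ S * y := by gcongr
              _ = s * c := hyS
              _ ≤ 2 * s := by nlinarith
          have h4 : (s / 2) ^ 2 ≤ (s * c) ^ 2 := by
            gcongr; nlinarith
          refine le_trans ?_ h4
          by_cases hb : A * s - 16 * A ^ 2 ≤ 0
          · exact (mul_nonpos_of_nonpos_of_nonneg hb (by positivity)).trans (by positivity)
          · push Not at hb
            have hsA : 16 * A < s := by nlinarith
            have h6 := mul_le_mul_of_nonneg_left hy2 (by linarith : 0 ≤ s - 16 * A)
            nlinarith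
        linarith

/-- **Theorem 3.6(ii), characteristic-polynomial part** (critical-regime asymptotics of
the average characteristic polynomial, with the normalization written out). -/
theorem thm_3_6_ii_charpoly (r ν0 m : ℕ) (ν : Fin r → ℕ) (τ : ℝ)
    (σ : ℕ → ℝ) (hσ : ∀ j < m, 0 < σ j) (ξ : ℝ) (hξ : 0 < ξ)
    (D : ℕ → ℝ)
    (hD : ∀ N : ℕ, D N = ∫ u in Set.Ioi (0 : ℝ),
      u ^ ν0 * Real.exp (-u) * Psi r ν0 ν u (ξ / Real.sqrt N) *
        (u + (N : ℝ) * (1 - τ / Real.sqrt N)⁻¹) ^ (N - m) *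
        ∏ j ∈ Finset.range m, (u + Real.sqrt N * σ j)) :
    Tendsto
      (fun N : ℕ =>
        (N : ℝ) ^ (-(N : ℝ) - ((ν0 : ℝ) - m + 1) / 2) *
          Real.exp (-Real.sqrt N * τ - τ ^ 2 / 2) * D N)
      atTop
      (𝓝 (∫ u in Set.Ioi (0 : ℝ),
        u ^ ν0 * Real.exp (-τ * u - u ^ 2 / 2) * G1R r ν0 ν (ξ * u) *
          ∏ j ∈ Finset.range m, (u + σ j))) := by
  set f : ℕ → ℝ → ℝ := fun N s => s ^ ν0 * (Real.exp (-(√(N : ℝ) * s)) *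
    (1 + s * (1 - τ / √(N : ℝ)) / √(N : ℝ)) ^ (N - m)) *
      Psi r ν0 ν (√(N : ℝ) * s) (ξ / √(N : ℝ)) * ∏ j ∈ Finset.range m, (s + σ j) with hf
  set P : ℕ → ℝ := fun N => Real.exp (-√(N : ℝ) * τ - τ ^ 2 / 2) *
    ((1 - τ / √(N : ℝ))⁻¹) ^ (N - m) with hP
  have hsqrt : Tendsto (fun N : ℕ => √(N : ℝ)) atTop atTop :=
    Real.tendsto_sqrt_atTop.comp tendsto_natCast_atTop_atTop
  have hinv : Tendsto (fun N : ℕ => (√(N : ℝ))⁻¹) atTop (𝓝 0) := hsqrt.inv_tendsto_atTop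
  have hτ0 : Tendsto (fun N : ℕ => τ / √(N : ℝ)) atTop (𝓝 0) := by
    simpa [div_eq_mul_inv] using hinv.const_mul τ
  have hc : Tendsto (fun N : ℕ => 1 - τ / √(N : ℝ)) atTop (𝓝 1) := by
    simpa using hτ0.const_sub 1
  have hpow : ∀ (y : ℕ → ℝ), Tendsto y atTop (𝓝 0) →
      ∀ᶠ N : ℕ in atTop, (1 + y N) ^ N * ((1 + y N) ^ m)⁻¹ = (1 + y N) ^ (N - m) := by
    intro y hy
    have : Tendsto (fun N => 1 + y N) atTop (𝓝 1) := by simpa using hy.const_add 1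
    filter_upwards [this.eventually_ne one_ne_zero, eventually_ge_atTop m] with N h1 h2
    exact (pow_sub₀ _ h1 h2).symm
  have hpow1 : ∀ (y : ℕ → ℝ), Tendsto y atTop (𝓝 0) →
      Tendsto (fun N => ((1 + y N) ^ m)⁻¹) atTop (𝓝 1) := by
    intro y hy
    have h1 : Tendsto (fun N => 1 + y N) atTop (𝓝 1) := by simpa using hy.const_add 1
    simpa using (h1.pow m).inv₀ (by simp)
  have hne : ∀ᶠ N : ℕ in atTop, √(N : ℝ) ≠ 0 := hsqrt.eventually_ne_atTop 0
  -- the prefactor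
  have hPlim : Tendsto P atTop (𝓝 1) := by
    have hy0 : Tendsto (fun N : ℕ => -(τ / √(N : ℝ))) atTop (𝓝 0) := by simpa using hτ0.neg
    have h1 := log_lim (fun N => -(τ / √(N : ℝ))) (-τ) (by
      refine tendsto_const_nhds.congr' ?_
      filter_upwards [hne] with N hN
      field_simp)
    have h2 := ((h1.mul (hpow1 _ hy0)).inv₀ (by simp [Real.exp_ne_zero])).mul_const
      (Real.exp (-(τ ^ 2 / 2)))
    have e : (Real.exp (-((-τ) ^ 2 / 2)) * 1)⁻¹ * Real.exp (-(τ ^ 2 / 2)) = 1 := by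
      rw [neg_sq, mul_one, inv_mul_cancel₀ (Real.exp_ne_zero _)]
    rw [e] at h2
    refine h2.congr' ?_
    filter_upwards [hne, hpow _ hy0] with N hN hN2
    have e1 : (N : ℝ) * -(τ / √(N : ℝ)) = -√(N : ℝ) * τ := by
      nth_rewrite 1 [← Real.sq_sqrt (Nat.cast_nonneg N)]
      field_simp
    have e2 : -√(N : ℝ) * τ - τ ^ 2 / 2 = -√(N : ℝ) * τ + -(τ ^ 2 / 2) := by ring
    rw [mul_right_comm, hN2, e1, hP]
    simp only
    rw [e2, Real.exp_add, mul_inv, ← Real.exp_neg, neg_neg, sub_eq_add_neg, inv_pow]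
    ring
  -- pointwise convergence
  have hflim : ∀ s ∈ Set.Ioi (0 : ℝ), Tendsto (fun N => f N s) atTop
      (𝓝 (s ^ ν0 * Real.exp (-τ * s - s ^ 2 / 2) * G1R r ν0 ν (ξ * s) *
          ∏ j ∈ Finset.range m, (s + σ j))) := by
    intro s hs
    refine ((Tendsto.const_mul _ ?_).mul (psi_tendsto r ν0 ν ξ s hs hξ)).mul_const _
    have hy0 : Tendsto (fun N : ℕ => s * (1 - τ / √(N : ℝ)) / √(N : ℝ)) atTop (𝓝 0) := by
      simpa [div_eq_mul_inv] using (hc.const_mul s).mul hinv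
    have h1 := log_lim (fun N : ℕ => s * (1 - τ / √(N : ℝ)) / √(N : ℝ)) s (by
      have := hc.const_mul s
      rw [mul_one] at this
      refine this.congr' ?_
      filter_upwards [hne] with N hN
      field_simp)
    have h2 := (h1.mul (hpow1 _ hy0)).mul_const (Real.exp (-τ * s))
    have e : Real.exp (-(s ^ 2 / 2)) * 1 * Real.exp (-τ * s) =
        Real.exp (-τ * s - s ^ 2 / 2) := by
      rw [mul_one, ← Real.exp_add]; congr 1; ring
    rw [e] at h2
    refine h2.congr' ?_
    filter_upwards [hne, hpow _ hy0] with N hN hN2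
    have e1 : (N : ℝ) * (s * (1 - τ / √(N : ℝ)) / √(N : ℝ)) = √(N : ℝ) * s - τ * s := by
      nth_rewrite 1 [← Real.sq_sqrt (Nat.cast_nonneg N)]
      field_simp
    have e2 : Real.exp (-(√(N : ℝ) * s)) =
        Real.exp (-(√(N : ℝ) * s - τ * s)) * Real.exp (-τ * s) := by
      rw [← Real.exp_add]; congr 1; ring
    rw [← hN2, e1, e2]
    ring
  -- domination
  set A : ℝ := |τ| + ξ + m + 2 with hA
  have hA1 : 1 ≤ A := by
    have := abs_nonneg τ
    have : (0 : ℝ) ≤ m := m.cast_nonneg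
    linarith
  set K : ℝ := (ν0.factorial : ℝ) * (∏ j ∈ Finset.range m, (1 + |σ j|)) *
    Real.exp (ξ + 16 * A ^ 2) with hK
  have hbound : ∀ᶠ N : ℕ in atTop, ∀ s ∈ Set.Ioi (0 : ℝ), ‖f N s‖ ≤ K * Real.exp (-s) := by
    filter_upwards [hsqrt.eventually_ge_atTop (32 * A), hc.eventually_le_const (one_lt_two),
      hc.eventually_const_le (by norm_num : (1 / 2 : ℝ) < 1)] with N hN hN2 hN1 s hs
    have hs0 : 0 < s := hs
    have hS0 : 0 < √(N : ℝ) := by linarith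
    have g1 := gauss_bound (√(N : ℝ)) τ A s (N - m) N (Nat.sub_le _ _)
      (Real.sq_sqrt (Nat.cast_nonneg N)) hA1 hN hN1 hN2 hs0
    have g2 : |Psi r ν0 ν (√(N : ℝ) * s) (ξ / √(N : ℝ))| ≤ Real.exp (ξ + ξ * s) := by
      refine (psi_bound _ _ _ _ _).trans (Real.exp_le_exp.mpr ?_)
      rw [abs_of_pos (by positivity), abs_of_pos (by positivity), mul_add, mul_one]
      have e : ξ / √(N : ℝ) * (√(N : ℝ) * s) = ξ * s := by field_simp
      rw [e]
      have := div_le_self hξ.le (by linarith : 1 ≤ √(N : ℝ))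
      linarith
    have g3 : s ^ ν0 ≤ ν0.factorial * Real.exp s := by
      have := Real.pow_div_factorial_le_exp s hs0.le ν0
      rwa [div_le_iff₀' (by positivity)] at this
    have g4 : |∏ j ∈ Finset.range m, (s + σ j)| ≤
        (∏ j ∈ Finset.range m, (1 + |σ j|)) * Real.exp (m * s) := by
      rw [Finset.abs_prod]
      calc _ ≤ ∏ j ∈ Finset.range m, ((1 + |σ j|) * Real.exp s) := by
            refine Finset.prod_le_prod (fun _ _ => abs_nonneg _) fun j _ => ?_
            have h1 := Real.add_one_le_exp s
            have h2 := abs_nonneg (σ j)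
            have h3 := abs_add_le s (σ j)
            rw [abs_of_pos hs0] at h3
            nlinarith
        _ = _ := by rw [Finset.prod_mul_distrib, Finset.prod_const, Finset.card_range,
                      ← Real.exp_nat_mul]
    have hy : 0 ≤ 1 + s * (1 - τ / √(N : ℝ)) / √(N : ℝ) := by
      have : 0 ≤ 1 - τ / √(N : ℝ) := by linarith
      positivity
    have hPp : 0 ≤ ∏ j ∈ Finset.range m, (1 + |σ j|) :=
      Finset.prod_nonneg fun j _ => by positivity
    rw [hf]
    simp only
    rw [Real.norm_eq_abs, abs_mul, abs_mul, abs_mul, abs_of_nonneg (pow_nonneg hs0.le ν0),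
      abs_of_nonneg (mul_nonneg (Real.exp_pos _).le (pow_nonneg hy _))]
    calc _ ≤ (ν0.factorial * Real.exp s) * Real.exp (-τ * s - A * s + 16 * A ^ 2) *
          Real.exp (ξ + ξ * s) *
            ((∏ j ∈ Finset.range m, (1 + |σ j|)) * Real.exp (m * s)) := by
          gcongr
      _ = (ν0.factorial * ∏ j ∈ Finset.range m, (1 + |σ j|)) *
          Real.exp (s + (-τ * s - A * s + 16 * A ^ 2) + (ξ + ξ * s) + m * s) := by
          rw [Real.exp_add (s + (-τ * s - A * s + 16 * A ^ 2) + (ξ + ξ * s)),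
            Real.exp_add (s + (-τ * s - A * s + 16 * A ^ 2)), Real.exp_add s]
          ring
      _ ≤ (ν0.factorial * ∏ j ∈ Finset.range m, (1 + |σ j|)) *
          Real.exp (ξ + 16 * A ^ 2 + -s) := by
          refine mul_le_mul_of_nonneg_left (Real.exp_le_exp.mpr ?_) (by positivity)
          have h1 : -τ * s ≤ |τ| * s := by
            gcongr; exact neg_le_abs τ
          have h2 : A * s = |τ| * s + ξ * s + m * s + 2 * s := by rw [hA]; ring
          linarith
      _ = _ := by rw [Real.exp_add, hK]; ring
  have hint : Integrable (fun s => K * Real.exp (-s)) (volume.restrict (Set.Ioi (0 : ℝ))) := by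
    have := (integrableOn_exp_neg_Ioi 0).const_mul K
    exact this
  have hmain : Tendsto (fun N => ∫ s in Set.Ioi (0 : ℝ), f N s) atTop
      (𝓝 (∫ u in Set.Ioi (0 : ℝ),
        u ^ ν0 * Real.exp (-τ * u - u ^ 2 / 2) * G1R r ν0 ν (ξ * u) *
          ∏ j ∈ Finset.range m, (u + σ j))) := by
    refine tendsto_integral_filter_of_dominated_convergence (fun s => K * Real.exp (-s))
      ?_ ?_ hint ?_
    · refine Eventually.of_forall fun N => Measurable.aestronglyMeasurable ?_
      have hm : Measurable fun s => Psi r ν0 ν (√(N : ℝ) * s) (ξ / √(N : ℝ)) :=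
        (psi_measurable r ν0 ν _).comp (measurable_const_mul _)
      have hm1 : Measurable fun s : ℝ => s ^ ν0 * (Real.exp (-(√(N : ℝ) * s)) *
          (1 + s * (1 - τ / √(N : ℝ)) / √(N : ℝ)) ^ (N - m)) :=
        Continuous.measurable (by fun_prop)
      have hm2 : Measurable fun s : ℝ => ∏ j ∈ Finset.range m, (s + σ j) :=
        Continuous.measurable (by fun_prop)
      exact (hm1.mul hm).mul hm2
    · filter_upwards [hbound] with N hN
      exact (ae_restrict_iff' measurableSet_Ioi).mpr (Eventually.of_forall hN)
    · exact (ae_restrict_iff' measurableSet_Ioi).mpr (Eventually.of_forall hflim)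
  have hfin := hPlim.mul hmain
  rw [one_mul] at hfin
  refine hfin.congr' ?_
  filter_upwards [hsqrt.eventually_gt_atTop 0, hc.eventually_ne one_ne_zero,
    eventually_ge_atTop m] with N hS hcN hNm
  rw [hD N]
  have hcv := integral_comp_mul_left_Ioi' (fun u : ℝ => u ^ ν0 * Real.exp (-u) *
        Psi r ν0 ν u (ξ / Real.sqrt N) *
        (u + (N : ℝ) * (1 - τ / Real.sqrt N)⁻¹) ^ (N - m) *
        ∏ j ∈ Finset.range m, (u + Real.sqrt N * σ j)) 0 hS
  rw [mul_zero] at hcv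
  rw [← hcv]
  have hSq : (N : ℝ) = √(N : ℝ) ^ 2 := (Real.sq_sqrt (Nat.cast_nonneg N)).symm
  have hpt : ∀ s : ℝ, (√(N : ℝ) * s) ^ ν0 * Real.exp (-(√(N : ℝ) * s)) *
        Psi r ν0 ν (√(N : ℝ) * s) (ξ / Real.sqrt N) *
        (√(N : ℝ) * s + (N : ℝ) * (1 - τ / Real.sqrt N)⁻¹) ^ (N - m) *
        ∏ j ∈ Finset.range m, (√(N : ℝ) * s + Real.sqrt N * σ j) =
      (√(N : ℝ) ^ ν0 * √(N : ℝ) ^ m * (N : ℝ) ^ (N - m) *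
        ((1 - τ / Real.sqrt N)⁻¹) ^ (N - m)) * f N s := by
    intro s
    have e1 : ∏ j ∈ Finset.range m, (√(N : ℝ) * s + Real.sqrt N * σ j) =
        √(N : ℝ) ^ m * ∏ j ∈ Finset.range m, (s + σ j) := by
      simp only [← mul_add]
      rw [Finset.prod_mul_distrib, Finset.prod_const, Finset.card_range]
    have e2 : √(N : ℝ) * s + (N : ℝ) * (1 - τ / Real.sqrt N)⁻¹ =
        (N : ℝ) * (1 - τ / Real.sqrt N)⁻¹ * (1 + s * (1 - τ / √(N : ℝ)) / √(N : ℝ)) := by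
      generalize 1 - τ / √(N : ℝ) = c at hcN
      have : (N : ℝ) / √(N : ℝ) = √(N : ℝ) := Real.div_sqrt
      have e3 : (N : ℝ) * c⁻¹ * (1 + s * c / √(N : ℝ)) =
          N * c⁻¹ + (N : ℝ) / √(N : ℝ) * s * (c⁻¹ * c) := by ring
      rw [e3, this, inv_mul_cancel₀ hcN]; ring
    rw [e1, e2, hf, mul_pow, mul_pow, mul_pow]
    ring
  simp only [hpt]
  rw [integral_const_mul, smul_eq_mul, hP]
  have hpw : (N : ℝ) ^ (-(N : ℝ) - ((ν0 : ℝ) - m + 1) / 2) *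
      (√(N : ℝ) * (√(N : ℝ) ^ ν0 * √(N : ℝ) ^ m * (N : ℝ) ^ (N - m))) = 1 := by
    have hN0 : (0 : ℝ) < N := Real.sqrt_pos.mp hS
    rw [← Real.rpow_natCast (N : ℝ) (N - m), ← Real.rpow_natCast (√(N : ℝ)) ν0,
      ← Real.rpow_natCast (√(N : ℝ)) m, Real.sqrt_eq_rpow, ← Real.rpow_mul hN0.le,
      ← Real.rpow_mul hN0.le, ← Real.rpow_add hN0, ← Real.rpow_add hN0, ← Real.rpow_add hN0,
      ← Real.rpow_add hN0, Nat.cast_sub hNm]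
    convert Real.rpow_zero (N : ℝ) using 2
    ring
  calc _ = ((N : ℝ) ^ (-(N : ℝ) - ((ν0 : ℝ) - m + 1) / 2) *
      (√(N : ℝ) * (√(N : ℝ) ^ ν0 * √(N : ℝ) ^ m * (N : ℝ) ^ (N - m)))) *
        (Real.exp (-√(N : ℝ) * τ - τ ^ 2 / 2) *
    ((1 - τ / √(N : ℝ))⁻¹) ^ (N - m) * ∫ s in Set.Ioi (0 : ℝ), f N s) := by rw [hpw, one_mul]
    _ = _ := by ring


end
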